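/- Let M_1 be the path poset with n elements (ranks 0 through n-1) and M_2 the m'-by-n' box poset with m' <= n'. Then the wedge product of M_1 and M_2 is Macaulay if and only if n <= n' or m' <= 2. -/

import Mathlib

/-!
Write `m = m'` and `k = n'`, with `m ≤ k`. A level `d ≥ 1` of the wedge consists of at most one
path point and of the box points `(i, d - i)`. The path point gets the *code* `0` and `(i, j)` gets
the code `i + 1`, so that each level becomes a set of natural numbers: possibly `0`, together with
an interval `[lowC k d, highC m d]`. Covering is now explicit (`covBy_iff`): the shadow of a code
set `C` consists of `0` if `0 ∈ C` and the path continues, and of those elements of `I ∪ (I + 1)`,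
`I = C \ {0}`, that lie in the interval of the next level.

Sufficiency. Initial segments are the upward closed parts of a level. The box points of a level are
ordered by their code, and the path point is put on top if `n ≤ k` and at the bottom if `k < n` and
`m ≤ 2`. For a set `I` in the interval of level `d` the box shadow has at least `#I + 1` elements
(if `I` is nonempty and `d + 1 < m`), at least `#I` elements (if `m ≤ d + 1 < k`), and, if
`k ≤ d + 1`, at least `#I` elements unless `I` is the whole interval, which loses one
(`boxShadow_lower`); final intervals attain these bounds (`boxShadow_upper`). Adding the
contribution of the path point gives `card_codeShadow_le`.

Necessity (`not_macaulay`). If `3 ≤ m` and `k < n`, then on level one only the path point has a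
shadow of size one, so it comes first there, and hence on every level of the path, since the shadow
of an initial segment is an initial segment. On level `k - 1` the `m` box points have a shadow of
size `m - 1`. The initial segment of size `m` consists of the path point and all box points but
one, and its shadow has size at least `1 + (m - 1)`, a contradiction.
-/

open Finset

instance {α : Type*} [Fintype α] : Fintype (WithBot α) := inferInstanceAs (Fintype (Option α))
instance {α : Type*} [Fintype α] : Fintype (WithTop α) := inferInstanceAs (Fintype (Option α))

variable {α : Type*}

open Classical in
noncomputable def shadow [PartialOrder α] [Fintype α] (A : Finset α) : Finset α :=
  Finset.univ.filter (fun b => ∃ a ∈ A, a ⋖ b)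

def IsRankFn [PartialOrder α] (rank : α → ℕ) : Prop :=
  (∃ x, rank x = 0 ∧ ∀ y, x ≤ y) ∧ ∀ a b : α, a ⋖ b → rank b = rank a + 1

def IsInitSeg [PartialOrder α] (rank : α → ℕ) (lt : α → α → Prop) (d : ℕ)
    (S : Finset α) : Prop :=
  (∀ x ∈ S, rank x = d) ∧ ∀ a ∈ S, ∀ b, rank b = d → lt a b → b ∈ S

def MacaulayWith [PartialOrder α] [Fintype α] (rank : α → ℕ)
    (lt : α → α → Prop) : Prop :=
  IsTrichotomous α lt ∧ IsTrans α lt ∧ IsIrrefl α lt ∧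
  (∀ d (A S : Finset α), (∀ x ∈ A, rank x = d) → IsInitSeg rank lt d S →
    S.card = A.card → (shadow S).card ≤ (shadow A).card) ∧
  (∀ d (S : Finset α), IsInitSeg rank lt d S → IsInitSeg rank lt (d + 1) (shadow S))

def IsMacaulay [PartialOrder α] [Fintype α] (rank : α → ℕ) : Prop :=
  ∃ lt : α → α → Prop, MacaulayWith rank lt

abbrev Wedge (P Q : Type*) [PartialOrder P] [PartialOrder Q] [OrderBot P] [OrderBot Q] :=
  WithBot ({p : P // p ≠ ⊥} ⊕ {q : Q // q ≠ ⊥})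

def wedgeRank {P Q : Type*} [PartialOrder P] [PartialOrder Q] [OrderBot P] [OrderBot Q]
    (rP : P → ℕ) (rQ : Q → ℕ) : Wedge P Q → ℕ :=
  WithBot.recBotCoe 0 (Sum.elim (fun p => rP p.1) (fun q => rQ q.1))

open Classical in
noncomputable def wedgeInl {P Q : Type*} [PartialOrder P] [PartialOrder Q] [OrderBot P]
    [OrderBot Q] (p : P) : Wedge P Q :=
  if h : p = ⊥ then ⊥ else
    ((Sum.inl ⟨p, h⟩ : {p : P // p ≠ ⊥} ⊕ {q : Q // q ≠ ⊥}) : Wedge P Q)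

open Classical in
noncomputable def wedgeInr {P Q : Type*} [PartialOrder P] [PartialOrder Q] [OrderBot P]
    [OrderBot Q] (q : Q) : Wedge P Q :=
  if h : q = ⊥ then ⊥ else
    ((Sum.inr ⟨q, h⟩ : {p : P // p ≠ ⊥} ⊕ {q : Q // q ≠ ⊥}) : Wedge P Q)

abbrev Diamond (P Q : Type*) [PartialOrder P] [PartialOrder Q] [OrderBot P] [OrderBot Q]
    [OrderTop P] [OrderTop Q] :=
  WithBot (WithTop ({p : P // p ≠ ⊥ ∧ p ≠ ⊤} ⊕ {q : Q // q ≠ ⊥ ∧ q ≠ ⊤}))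

def diamondRank {P Q : Type*} [PartialOrder P] [PartialOrder Q] [OrderBot P] [OrderBot Q]
    [OrderTop P] [OrderTop Q] (rP : P → ℕ) (rQ : Q → ℕ) (s : ℕ) : Diamond P Q → ℕ :=
  WithBot.recBotCoe 0 (WithTop.recTopCoe s (Sum.elim (fun p => rP p.1) (fun q => rQ q.1)))

def diamondInl {P Q : Type*} [PartialOrder P] [PartialOrder Q] [OrderBot P] [OrderBot Q]
    [OrderTop P] [OrderTop Q] (p : {p : P // p ≠ ⊥ ∧ p ≠ ⊤}) : Diamond P Q :=
  (((Sum.inl p : {p : P // p ≠ ⊥ ∧ p ≠ ⊤} ⊕ {q : Q // q ≠ ⊥ ∧ q ≠ ⊤}) :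
    WithTop ({p : P // p ≠ ⊥ ∧ p ≠ ⊤} ⊕ {q : Q // q ≠ ⊥ ∧ q ≠ ⊤})) : Diamond P Q)

abbrev Box (a b : ℕ) := Fin a × Fin b

def boxRank {a b : ℕ} : Box a b → ℕ := fun p => p.1.val + p.2.val

abbrev BoxF {n : ℕ} (d : Fin n → ℕ) := ∀ i, Fin (d i + 1)

def boxFRank {n : ℕ} {d : Fin n → ℕ} : BoxF d → ℕ := fun x => ∑ i, (x i).val

def diamondInr {P Q : Type*} [PartialOrder P] [PartialOrder Q] [OrderBot P] [OrderBot Q]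
    [OrderTop P] [OrderTop Q] (q : {q : Q // q ≠ ⊥ ∧ q ≠ ⊤}) : Diamond P Q :=
  (((Sum.inr q : {p : P // p ≠ ⊥ ∧ p ≠ ⊤} ⊕ {q : Q // q ≠ ⊥ ∧ q ≠ ⊤}) :
    WithTop ({p : P // p ≠ ⊥ ∧ p ≠ ⊤} ⊕ {q : Q // q ≠ ⊥ ∧ q ≠ ⊤})) : Diamond P Q)

abbrev WedgeFam {ι : Type*} (P : ι → Type*) [∀ i, PartialOrder (P i)]
    [∀ i, OrderBot (P i)] :=
  WithBot (Σ i, {p : P i // p ≠ ⊥})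

def wedgeFamRank {ι : Type*} {P : ι → Type*} [∀ i, PartialOrder (P i)]
    [∀ i, OrderBot (P i)] (rank : ∀ i, P i → ℕ) : WedgeFam P → ℕ :=
  WithBot.recBotCoe 0 (fun s => rank s.1 s.2.1)

abbrev DiamondFam {ι : Type*} (P : ι → Type*) [∀ i, PartialOrder (P i)]
    [∀ i, OrderBot (P i)] [∀ i, OrderTop (P i)] :=
  WithBot (WithTop (Σ i, {p : P i // p ≠ ⊥ ∧ p ≠ ⊤}))

def diamondFamRank {ι : Type*} {P : ι → Type*} [∀ i, PartialOrder (P i)]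
    [∀ i, OrderBot (P i)] [∀ i, OrderTop (P i)] (rank : ∀ i, P i → ℕ) (s : ℕ) :
    DiamondFam P → ℕ :=
  WithBot.recBotCoe 0 (WithTop.recTopCoe s (fun x => rank x.1 x.2.1))

/-! ### The wedge of a path and a box in coordinates -/

noncomputable section
variable {n m k : ℕ} [NeZero n] [NeZero m] [NeZero k]

/-- The wedge of the path with `n` elements and the `m`-by-`k` box. -/
abbrev PBW (n m k : ℕ) [NeZero n] [NeZero m] [NeZero k] := Wedge (Fin n) (Box m k)

theorem fin_bot_val (a : ℕ) [NeZero a] : ((⊥ : Fin a) : ℕ) = 0 :=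
  Nat.le_zero.1 (Fin.le_def.1 (bot_le : (⊥ : Fin a) ≤ 0))

/-- The rank function of the wedge. -/
def wrk : PBW n m k → ℕ := wedgeRank Fin.val boxRank

/-- The code of an element: `0` on the path (and at `⊥`), `i + 1` at the box point `(i, j)`.
Together with the rank it determines the element, see `wcode_inj`. -/
def wcode : PBW n m k → ℕ :=
  WithBot.recBotCoe 0 (Sum.elim (fun _ => 0) (fun q => q.1.1.val + 1))

/-- The point of rank `a ≠ 0` on the path. -/
def pathPt (a : ℕ) (h0 : a ≠ 0) (h : a < n) : PBW n m k :=
  ((Sum.inl ⟨⟨a, h⟩, fun e => h0 (by simpa [fin_bot_val] using congrArg Fin.val e)⟩ :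
    {p : Fin n // p ≠ ⊥} ⊕ {q : Box m k // q ≠ ⊥}) : PBW n m k)

/-- The point `(i, j)` of the box, different from the origin. -/
def boxPt (i j : ℕ) (h0 : i + j ≠ 0) (hi : i < m) (hj : j < k) : PBW n m k :=
  ((Sum.inr ⟨(⟨i, hi⟩, ⟨j, hj⟩), fun e => h0 (by
      have h1 := congrArg (fun q : Box m k => q.1.val) e
      have h2 := congrArg (fun q : Box m k => q.2.val) e
      simp only [Prod.fst_bot, Prod.snd_bot, fin_bot_val] at h1 h2
      omega)⟩ :
    {p : Fin n // p ≠ ⊥} ⊕ {q : Box m k // q ≠ ⊥}) : PBW n m k)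

theorem PBW.cases (x : PBW n m k) : x = ⊥ ∨ (∃ a h0 h, x = pathPt a h0 h) ∨
    ∃ i j h0 hi hj, x = boxPt i j h0 hi hj := by
  induction x using WithBot.recBotCoe with
  | bot => exact Or.inl rfl
  | coe x =>
    rcases x with ⟨⟨a, ha⟩, h⟩ | ⟨⟨⟨i, hi⟩, ⟨j, hj⟩⟩, h⟩
    · refine Or.inr (Or.inl ⟨a, ?_, ha, rfl⟩)
      rintro rfl
      exact h rfl
    · refine Or.inr (Or.inr ⟨i, j, ?_, hi, hj, rfl⟩)
      intro e
      obtain ⟨rfl, rfl⟩ : i = 0 ∧ j = 0 := by omega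
      exact h rfl

@[simp] theorem wrk_bot : wrk (⊥ : PBW n m k) = 0 := rfl
@[simp] theorem wrk_path (a h0 h) : wrk (pathPt a h0 h : PBW n m k) = a := rfl
@[simp] theorem wrk_box (i j h0 hi hj) : wrk (boxPt i j h0 hi hj : PBW n m k) = i + j := rfl
@[simp] theorem wcode_bot : wcode (⊥ : PBW n m k) = 0 := rfl
@[simp] theorem wcode_path (a h0 h) : wcode (pathPt a h0 h : PBW n m k) = 0 := rfl
@[simp] theorem wcode_box (i j h0 hi hj) :
    wcode (boxPt i j h0 hi hj : PBW n m k) = i + 1 := rfl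

theorem path_lt_path (a h0 h b h0' h') :
    (pathPt a h0 h : PBW n m k) < pathPt b h0' h' ↔ a < b := by
  simp [pathPt, WithBot.coe_lt_coe, Sum.inl_lt_inl_iff]

theorem box_le_box (i j h0 hi hj i' j' h0' hi' hj') :
    (boxPt i j h0 hi hj : PBW n m k) ≤ boxPt i' j' h0' hi' hj' ↔ i ≤ i' ∧ j ≤ j' := by
  simp [boxPt, WithBot.coe_le_coe, Sum.inr_le_inr_iff]

theorem not_path_lt_box (a h0 h i j h0' hi hj) :
    ¬ ((pathPt a h0 h : PBW n m k) < boxPt i j h0' hi hj) := by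
  simp [pathPt, boxPt, WithBot.coe_lt_coe]

theorem not_box_lt_path (a h0 h i j h0' hi hj) :
    ¬ ((boxPt i j h0' hi hj : PBW n m k) < pathPt a h0 h) := by
  simp [pathPt, boxPt, WithBot.coe_lt_coe]

theorem box_lt_box (i j h0 hi hj i' j' h0' hi' hj') :
    (boxPt i j h0 hi hj : PBW n m k) < boxPt i' j' h0' hi' hj' ↔
      i ≤ i' ∧ j ≤ j' ∧ i + j < i' + j' := by
  rw [lt_iff_le_not_ge, box_le_box, box_le_box]
  omega

theorem bot_lt_of_wrk (x : PBW n m k) : ⊥ < x ↔ 0 < wrk x := by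
  rcases PBW.cases x with rfl | ⟨a, h0, h, rfl⟩ | ⟨i, j, h0, hi, hj, rfl⟩
  · simp
  · simp only [pathPt, WithBot.bot_lt_coe, true_iff]
    change 0 < a
    omega
  · simp only [boxPt, WithBot.bot_lt_coe, true_iff]
    change 0 < i + j
    omega

theorem wrk_strictMono {x y : PBW n m k} (hxy : x < y) : wrk x < wrk y := by
  rcases PBW.cases x with rfl | ⟨a, h0, h, rfl⟩ | ⟨i, j, h0, hi, hj, rfl⟩
  · exact (bot_lt_of_wrk y).1 hxy
  all_goals rcases PBW.cases y with rfl | ⟨b, h0', h', rfl⟩ | ⟨i', j', h0', hi', hj', rfl⟩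
  · exact absurd hxy not_lt_bot
  · exact (path_lt_path ..).1 hxy
  · exact (not_path_lt_box _ _ _ _ _ _ _ _ hxy).elim
  · exact absurd hxy not_lt_bot
  · exact (not_box_lt_path _ _ _ _ _ _ _ _ hxy).elim
  · exact ((box_lt_box ..).1 hxy).2.2

theorem wrk_eq_zero {x : PBW n m k} : wrk x = 0 ↔ x = ⊥ := by
  have := bot_lt_of_wrk x
  rw [bot_lt_iff_ne_bot] at this
  rw [← not_iff_not, ← ne_eq, ← ne_eq, ← Nat.pos_iff_ne_zero, ← this]

theorem covBy_of_wrk {x y : PBW n m k} (h : x < y) (hr : wrk y = wrk x + 1) : x ⋖ y :=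
  ⟨h, fun z hz hz' => by have := wrk_strictMono hz; have := wrk_strictMono hz'; omega⟩

theorem bot_covBy {x : PBW n m k} (h : wrk x = 1) : ⊥ ⋖ x :=
  covBy_of_wrk ((bot_lt_of_wrk x).2 (by omega)) (by simpa using h)

theorem wcode_inj {x y : PBW n m k} (hr : wrk x = wrk y) (hc : wcode x = wcode y) :
    x = y := by
  rcases PBW.cases x with rfl | ⟨a, h0, h, rfl⟩ | ⟨i, j, h0, hi, hj, rfl⟩
  · exact (wrk_eq_zero.1 hr.symm).symm
  all_goals rcases PBW.cases y with rfl | ⟨b, h0', h', rfl⟩ | ⟨i', j', h0', hi', hj', rfl⟩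
  all_goals simp only [wrk_bot, wrk_path, wrk_box, wcode_bot, wcode_path, wcode_box] at hr hc
  all_goals try omega
  · subst hr; rfl
  · obtain rfl : i = i' := by omega
    obtain rfl : j = j' := by omega
    rfl

/-- `c` is the code of an element of rank `d`, provided `d ≠ 0` (see `exists_wcode`). -/
def Valid (n m k d c : ℕ) : Prop :=
  (c = 0 ∧ d < n) ∨ (1 ≤ c ∧ c ≤ m ∧ c ≤ d + 1 ∧ d + 2 ≤ k + c)

theorem exists_wcode {d : ℕ} (hd : d ≠ 0) (c : ℕ) :
    (∃ x : PBW n m k, wrk x = d ∧ wcode x = c) ↔ Valid n m k d c := by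
  constructor
  · rintro ⟨x, rfl, rfl⟩
    rcases PBW.cases x with rfl | ⟨a, h0, h, rfl⟩ | ⟨i, j, h0, hi, hj, rfl⟩
    · simp at hd
    · exact Or.inl ⟨rfl, h⟩
    · right
      simp only [wrk_box, wcode_box]
      omega
  · rintro (⟨rfl, h⟩ | ⟨h1, h2, h3, h4⟩)
    · exact ⟨pathPt d hd h, rfl, rfl⟩
    · refine ⟨boxPt (c - 1) (d + 1 - c) (by omega) (by omega) (by omega), ?_, ?_⟩
      · simp only [wrk_box]; omega
      · simp only [wcode_box]; omega

/-- Covering in terms of ranks and codes: a path point is covered by the next path point, and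
`(i, j)` by `(i, j + 1)` and `(i + 1, j)`. -/
theorem covBy_iff {x y : PBW n m k} (hx : wrk x ≠ 0) :
    x ⋖ y ↔ wrk y = wrk x + 1 ∧ ((wcode x = 0 ∧ wcode y = 0) ∨
      (wcode x ≠ 0 ∧ (wcode y = wcode x ∨ wcode y = wcode x + 1))) := by
  rcases PBW.cases x with rfl | ⟨a, h0, h, rfl⟩ | ⟨i, j, h0, hi, hj, rfl⟩
  · simp at hx
  all_goals rcases PBW.cases y with rfl | ⟨b, h0', h', rfl⟩ | ⟨i', j', h0', hi', hj', rfl⟩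
  all_goals simp only [wrk_bot, wrk_path, wrk_box, wcode_bot, wcode_path, wcode_box]
  · exact ⟨fun h => absurd h.lt not_lt_bot, fun h => by omega⟩
  · constructor
    · intro hc
      have h1 := (path_lt_path ..).1 hc.lt
      by_contra hne
      have h2 : a + 1 < b := lt_of_le_of_ne h1 fun e => hne ⟨e.symm, by simp⟩
      exact hc.2 (c := pathPt (a + 1) (by omega) (by omega))
        ((path_lt_path ..).2 (Nat.lt_succ_self a)) ((path_lt_path ..).2 h2)
    · rintro ⟨h1, -⟩
      exact covBy_of_wrk ((path_lt_path ..).2 (by rw [h1]; exact Nat.lt_succ_self a)) h1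
  · exact ⟨fun h => (not_path_lt_box _ _ _ _ _ _ _ _ h.lt).elim, fun h => by omega⟩
  · exact ⟨fun h => absurd h.lt not_lt_bot, fun h => by omega⟩
  · exact ⟨fun h => (not_box_lt_path _ _ _ _ _ _ _ _ h.lt).elim, fun h => by omega⟩
  · constructor
    · intro hc
      have h1 := (box_lt_box ..).1 hc.lt
      by_contra hne
      by_cases hii : i < i'
      · exact hc.2 (c := boxPt (i + 1) j (by omega) (by omega) (by omega))
          ((box_lt_box ..).2 (by omega)) ((box_lt_box ..).2 (by omega))
      · exact hc.2 (c := boxPt i (j + 1) (by omega) (by omega) (by omega))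
          ((box_lt_box ..).2 (by omega)) ((box_lt_box ..).2 (by omega))
    · rintro ⟨h1, h2⟩
      exact covBy_of_wrk ((box_lt_box ..).2 (by omega)) h1


/-! ### Shadows of sets of codes -/

/-- The part of `I ∪ (I + 1)` inside the interval `[lo, hi]`. For `I` the codes of box points on
level `d` and `[lo, hi]` the box codes on level `d + 1`, these are the codes of the shadow. -/
def boxShadow (lo hi : ℕ) (I : Finset ℕ) : Finset ℕ :=
  (Icc lo hi).filter (fun c => c ∈ I ∨ ∃ b ∈ I, b + 1 = c)

theorem subset_boxShadow {lo hi : ℕ} {I : Finset ℕ} (hI : I ⊆ Icc lo hi) :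
    I ⊆ boxShadow lo hi I :=
  fun _ hx => mem_filter.2 ⟨hI hx, Or.inl hx⟩

theorem card_lt_card_boxShadow {lo hi : ℕ} {I : Finset ℕ} (hI : I ⊆ Icc lo hi)
    (hne : I.Nonempty) : I.card + 1 ≤ (boxShadow lo (hi + 1) I).card := by
  have hm := I.max'_mem hne
  have hnot : I.max' hne + 1 ∉ I := fun h => by have := I.le_max' _ h; omega
  rw [← card_insert_of_notMem hnot]
  refine card_le_card (insert_subset ?_ ?_)
  · have := mem_Icc.1 (hI hm)
    exact mem_filter.2 ⟨mem_Icc.2 (by omega), Or.inr ⟨_, hm, rfl⟩⟩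
  · exact subset_boxShadow (hI.trans (Icc_subset_Icc le_rfl (by omega)))

/-- When the shadow is cut off at both ends, the point `lo` may be lost, but unless `I` is the whole
interval the successor of a point of `I` just below a gap makes up for it. -/
theorem card_le_card_boxShadow_clip {lo hi : ℕ} {I : Finset ℕ} (hI : I ⊆ Icc lo hi) :
    I.card ≤ (boxShadow (lo + 1) hi I).card + 1 ∧
      (I.card ≤ (boxShadow (lo + 1) hi I).card ∨ I = Icc lo hi) := by
  have hsub : I.erase lo ⊆ boxShadow (lo + 1) hi I := fun x hx => by
    have h1 := mem_erase.1 hx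
    have h2 := mem_Icc.1 (hI h1.2)
    exact mem_filter.2 ⟨mem_Icc.2 (by omega), Or.inl h1.2⟩
  refine ⟨?_, ?_⟩
  · have h1 := card_le_card hsub
    have h2 := pred_card_le_card_erase (s := I) (a := lo)
    omega
  by_cases hlo : lo ∈ I
  swap
  · rw [erase_eq_of_notMem hlo] at hsub
    exact Or.inl (card_le_card hsub)
  by_cases hfull : I = Icc lo hi
  · exact Or.inr hfull
  left
  have hgap : ∃ g, g ∈ Icc lo hi ∧ g ∉ I := by
    by_contra! hcon
    exact hfull (Subset.antisymm hI hcon)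
  classical
  -- the least missing point lies one step above a point of `I`
  obtain ⟨hg1, hg2⟩ := Nat.find_spec hgap
  have hmin := fun b => Nat.find_min hgap (m := b)
  set g := Nat.find hgap
  have hg3 := mem_Icc.1 hg1
  have hne : g ≠ lo := fun e => hg2 (e ▸ hlo)
  have hpred : g - 1 ∈ I := by
    by_contra hcon
    exact hmin (g - 1) (by omega) ⟨mem_Icc.2 (by omega), hcon⟩
  have hins : insert g (I.erase lo) ⊆ boxShadow (lo + 1) hi I :=
    insert_subset (mem_filter.2 ⟨mem_Icc.2 (by omega), Or.inr ⟨_, hpred, by omega⟩⟩) hsub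
  have h1 := card_le_card hins
  rw [card_insert_of_notMem (fun h => hg2 (mem_erase.1 h).2), card_erase_of_mem hlo] at h1
  have := card_pos.2 ⟨lo, hlo⟩
  omega

theorem eq_Icc_of_upper {lo hi : ℕ} {J : Finset ℕ} (hJ : J ⊆ Icc lo hi) (hne : J.Nonempty)
    (hup : ∀ a ∈ J, ∀ b ∈ Icc lo hi, a < b → b ∈ J) :
    ∃ t, lo ≤ t ∧ t ≤ hi ∧ J = Icc t hi := by
  have hm := J.min'_mem hne
  have hm' := mem_Icc.1 (hJ hm)
  refine ⟨J.min' hne, hm'.1, hm'.2, ?_⟩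
  ext x
  rw [mem_Icc]
  refine ⟨fun hx => ⟨J.min'_le _ hx, (mem_Icc.1 (hJ hx)).2⟩, fun hx => ?_⟩
  rcases hx.1.eq_or_lt with h | h
  · exact h ▸ hm
  · exact hup _ hm _ (mem_Icc.2 ⟨by omega, hx.2⟩) h

theorem card_boxShadow_Icc_le (lo' hi' t hi : ℕ) :
    (boxShadow lo' hi' (Icc t hi)).card ≤ hi' + 1 - max t lo' := by
  rw [← Nat.card_Icc]
  refine card_le_card fun x hx => ?_
  obtain ⟨h1, h2⟩ := mem_filter.1 hx
  simp only [mem_Icc] at h1 h2 ⊢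
  rcases h2 with h2 | ⟨b, h2, h3⟩ <;> omega

/-- The least box code on level `d`; the second coordinate `d + 1 - c` must be less than `k`. -/
def lowC (k d : ℕ) : ℕ := max 1 (d + 2 - k)

/-- The greatest box code on level `d`. -/
def highC (m d : ℕ) : ℕ := min m (d + 1)

theorem valid_iff {n m k d c : ℕ} :
    Valid n m k d c ↔ (c = 0 ∧ d < n) ∨ c ∈ Icc (lowC k d) (highC m d) := by
  simp only [Valid, lowC, highC, mem_Icc]
  omega

/-- Lower bounds on box shadows: a level of the box grows below level `m - 1`, keeps its size up to
level `k - 1`, and shrinks from then on. -/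
theorem boxShadow_lower {m k d : ℕ} (hmk : m ≤ k) {I : Finset ℕ}
    (hI : I ⊆ Icc (lowC k d) (highC m d)) :
    let s := (boxShadow (lowC k (d + 1)) (highC m (d + 1)) I).card
    (d + 1 < m → I.card = 0 ∨ I.card + 1 ≤ s) ∧
    (m ≤ d + 1 → d + 2 ≤ k → I.card ≤ s) ∧
    (k ≤ d + 1 → I.card ≤ s + 1 ∧
      (I.card ≤ s ∨ I.card = highC m d + 1 - lowC k d)) := by
  intro s
  refine ⟨fun h => ?_, fun h h' => ?_, fun h => ?_⟩
  · rcases I.eq_empty_or_nonempty with rfl | hne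
    · simp
    · right
      have h1 : lowC k (d + 1) = lowC k d := by simp only [lowC]; omega
      have h2 : highC m (d + 1) = highC m d + 1 := by simp only [highC]; omega
      simp only [s, h1, h2]
      exact card_lt_card_boxShadow hI hne
  · have h1 : lowC k (d + 1) = lowC k d := by simp only [lowC]; omega
    have h2 : highC m (d + 1) = highC m d := by simp only [highC]; omega
    simp only [s, h1, h2]
    exact card_le_card (subset_boxShadow hI)
  · have h1 : lowC k (d + 1) = lowC k d + 1 := by simp only [lowC]; omega
    have h2 : highC m (d + 1) = highC m d := by simp only [highC]; omega
    simp only [s, h1, h2]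
    obtain ⟨h3, h4⟩ := card_le_card_boxShadow_clip hI
    refine ⟨h3, h4.imp_right fun e => ?_⟩
    rw [e, Nat.card_Icc]

/-- The box shadows of upward closed sets attain the bounds of `boxShadow_lower`. -/
theorem boxShadow_upper {m k d : ℕ} (hmk : m ≤ k) {J : Finset ℕ}
    (hJ : J ⊆ Icc (lowC k d) (highC m d))
    (hup : ∀ a ∈ J, ∀ b ∈ Icc (lowC k d) (highC m d), a < b → b ∈ J) :
    let r := (boxShadow (lowC k (d + 1)) (highC m (d + 1)) J).card
    (J.card = 0 → r = 0) ∧ r ≤ J.card + 1 ∧ (m ≤ d + 1 → r ≤ J.card) ∧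
    (k ≤ d + 1 → J.card = highC m d + 1 - lowC k d → r ≤ J.card - 1) := by
  intro r
  rcases J.eq_empty_or_nonempty with rfl | hne
  · have : r = 0 := by
      rw [card_eq_zero, eq_empty_iff_forall_notMem]
      intro x hx
      simpa using (mem_filter.1 hx).2
    simp [this]
  · obtain ⟨t, ht, ht', rfl⟩ := eq_Icc_of_upper hJ hne hup
    have h1 := card_boxShadow_Icc_le (lowC k (d + 1)) (highC m (d + 1)) t (highC m d)
    change r ≤ _ at h1
    rw [Nat.card_Icc]
    simp only [lowC, highC] at *
    omega

open Classical in
/-- The codes of the shadow of a set on level `d` with code set `C`, see `image_wcode_shadow`. -/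
def codeShadow (n m k d : ℕ) (C : Finset ℕ) : Finset ℕ :=
  (range (m + 1)).filter fun c => Valid n m k (d + 1) c ∧
    ∃ b ∈ C, (b = 0 ∧ c = 0) ∨ (b ≠ 0 ∧ (c = b ∨ c = b + 1))

theorem mem_codeShadow {n m k d : ℕ} {C : Finset ℕ} {c : ℕ} :
    c ∈ codeShadow n m k d C ↔ Valid n m k (d + 1) c ∧
      ∃ b ∈ C, (b = 0 ∧ c = 0) ∨ (b ≠ 0 ∧ (c = b ∨ c = b + 1)) := by
  simp only [codeShadow, mem_filter, mem_range, and_iff_right_iff_imp]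
  rintro ⟨h, -⟩
  simp only [Valid] at h
  omega

theorem card_codeShadow (n m k d : ℕ) (C : Finset ℕ) :
    (codeShadow n m k d C).card =
      (boxShadow (lowC k (d + 1)) (highC m (d + 1)) (C.erase 0)).card +
        if 0 ∈ C ∧ d + 1 < n then 1 else 0 := by
  have hbox : (codeShadow n m k d C).erase 0 =
      boxShadow (lowC k (d + 1)) (highC m (d + 1)) (C.erase 0) := by
    ext c
    have hl : 1 ≤ lowC k (d + 1) := le_max_left _ _
    simp only [mem_erase, mem_codeShadow, valid_iff, boxShadow, mem_filter, mem_Icc]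
    constructor
    · rintro ⟨h0, (h | h), b, hb, hbc⟩
      · exact absurd h.1 h0
      · refine ⟨h, ?_⟩
        rcases hbc with hbc | ⟨hb0, rfl | rfl⟩
        · exact absurd hbc.2 h0
        · exact Or.inl ⟨h0, hb⟩
        · exact Or.inr ⟨b, ⟨hb0, hb⟩, rfl⟩
    · rintro ⟨h, h'⟩
      refine ⟨by omega, Or.inr h, ?_⟩
      rcases h' with ⟨h0, hc⟩ | ⟨b, ⟨hb0, hb⟩, rfl⟩
      · exact ⟨c, hc, Or.inr ⟨h0, Or.inl rfl⟩⟩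
      · exact ⟨b, hb, Or.inr ⟨hb0, Or.inr rfl⟩⟩
  have hzero : 0 ∈ codeShadow n m k d C ↔ 0 ∈ C ∧ d + 1 < n := by
    rw [mem_codeShadow]
    constructor
    · rintro ⟨h, b, hb, ⟨rfl, -⟩ | h'⟩
      · simp only [Valid] at h
        exact ⟨hb, by omega⟩
      · omega
    · rintro ⟨h, h'⟩
      exact ⟨Or.inl ⟨rfl, h'⟩, 0, h, Or.inl ⟨rfl, rfl⟩⟩
  rw [← hbox]
  split_ifs with h
  · exact (card_erase_add_one (hzero.2 h)).symm
  · rw [erase_eq_of_notMem (mt hzero.1 h), add_zero]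

/-- The position of the code `c` in the order on a level: box points are ordered by their code, the
path point is placed at `κ`. -/
def rankKey (κ c : ℕ) : ℕ := if c = 0 then κ else c

/-- `T` is the code set of an initial segment of level `d`, that is, upward closed for `rankKey κ`. -/
def UpperCodes (n m k d κ : ℕ) (T : Finset ℕ) : Prop :=
  ∀ a ∈ T, ∀ b, Valid n m k d b → rankKey κ a < rankKey κ b → b ∈ T

theorem codes_subset {n m k d : ℕ} {C : Finset ℕ} (hC : ∀ c ∈ C, Valid n m k d c) :
    C.erase 0 ⊆ Icc (lowC k d) (highC m d) := fun c hc => by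
  obtain ⟨h0, h⟩ := mem_erase.1 hc
  exact (valid_iff.1 (hC c h)).resolve_left fun h => h0 h.1

theorem upper_erase {n m k d κ : ℕ} {T : Finset ℕ}
    (hup : UpperCodes n m k d κ T) :
    ∀ a ∈ T.erase 0, ∀ b ∈ Icc (lowC k d) (highC m d), a < b → b ∈ T.erase 0 := by
  intro a ha b hb hab
  have ha0 := (mem_erase.1 ha).1
  have hb0 : b ≠ 0 := by omega
  refine mem_erase.2 ⟨hb0, hup a (mem_erase.1 ha).2 b (valid_iff.2 (Or.inr hb)) ?_⟩
  simpa [rankKey, ha0, hb0] using hab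

/-- The contribution `p` of the path point to the size of a shadow. -/
theorem path_term {n d : ℕ} {C : Finset ℕ} (hC0 : 0 ∈ C → d < n) :
    let p := if 0 ∈ C ∧ d + 1 < n then 1 else 0
    (0 ∈ C ∧ C.card = (C.erase 0).card + 1 ∧ d < n ∧
      ((d + 1 < n ∧ p = 1) ∨ (n ≤ d + 1 ∧ p = 0))) ∨
    (0 ∉ C ∧ C.card = (C.erase 0).card ∧ p = 0) := by
  intro p
  by_cases h : 0 ∈ C
  · refine Or.inl ⟨h, (card_erase_add_one h).symm, hC0 h, ?_⟩
    by_cases h' : d + 1 < n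
    · exact Or.inl ⟨h', if_pos ⟨h, h'⟩⟩
    · exact Or.inr ⟨by omega, if_neg fun e => h' e.2⟩
  · exact Or.inr ⟨h, by rw [erase_eq_of_notMem h], if_neg fun e => h e.1⟩

/-- Among sets of codes of the same size, upward closed ones have the smallest shadow. -/
theorem card_codeShadow_le {n m k d κ : ℕ} (hmk : m ≤ k) (hd : d ≠ 0)
    (hκ : (κ = m + 1 ∧ n ≤ k) ∨ (κ = 0 ∧ k < n ∧ m ≤ 2)) {C T : Finset ℕ}
    (hC : ∀ c ∈ C, Valid n m k d c) (hT : ∀ c ∈ T, Valid n m k d c)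
    (hup : UpperCodes n m k d κ T) (hcard : T.card = C.card) :
    (codeShadow n m k d T).card ≤ (codeShadow n m k d C).card := by
  have hCs := codes_subset hC
  have hTs := codes_subset hT
  obtain ⟨l1, l2, l3⟩ := boxShadow_lower hmk hCs
  obtain ⟨u1, u2, u3, u4⟩ := boxShadow_upper hmk hTs (upper_erase hup)
  have hCle := card_le_card hCs
  have hTle := card_le_card hTs
  rw [Nat.card_Icc] at hCle hTle
  rw [card_codeShadow, card_codeShadow]
  have hlt : ∀ {D : Finset ℕ}, (∀ c ∈ D, Valid n m k d c) → 0 ∈ D → d < n :=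
    fun hD h => by have := hD 0 h; simp only [Valid] at this; omega
  have pC := path_term (hlt hC)
  have pT := path_term (hlt hT)
  have hT0 : κ = m + 1 → 0 ∉ T → d < n → (T.erase 0).card = 0 := by
    intro hk h0 hdn
    by_contra hcon
    obtain ⟨x, hx⟩ := card_pos.1 (Nat.pos_of_ne_zero hcon)
    obtain ⟨hx0, hxT⟩ := mem_erase.1 hx
    refine h0 (hup x hxT 0 (Or.inl ⟨rfl, hdn⟩) ?_)
    have := mem_Icc.1 (hTs hx)
    simp only [highC] at this
    simp only [rankKey, hx0, if_true, if_false]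
    omega
  have hT1 : κ = 0 → 0 ∈ T → (T.erase 0).card = highC m d + 1 - lowC k d := by
    intro hk h0
    rw [← Nat.card_Icc]
    congr 1
    refine Subset.antisymm hTs fun x hx => ?_
    have hx' := mem_Icc.1 hx
    have hx0 : x ≠ 0 := by simp only [lowC] at hx'; omega
    refine mem_erase.2 ⟨hx0, hup 0 h0 x (valid_iff.2 (Or.inr hx)) ?_⟩
    simp only [rankKey, hx0, if_true, if_false]
    omega
  clear hup hTs hCs hC hT hlt
  generalize (boxShadow (lowC k (d + 1)) (highC m (d + 1)) (C.erase 0)).card = s at *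
  generalize (boxShadow (lowC k (d + 1)) (highC m (d + 1)) (T.erase 0)).card = r at *
  generalize (C.erase 0).card = a at *
  generalize (T.erase 0).card = b at *
  generalize (if 0 ∈ C ∧ d + 1 < n then 1 else 0) = p at *
  generalize (if 0 ∈ T ∧ d + 1 < n then 1 else 0) = q at *
  simp only at pC pT
  generalize C.card = c at *
  generalize T.card = t at *
  have hlow : lowC k d = max 1 (d + 2 - k) := rfl
  have hhigh : highC m d = min m (d + 1) := rfl
  generalize lowC k d = lo at *
  generalize highC m d = hi at *
  rcases hκ with ⟨hk, hn⟩ | ⟨hk, hn, hm⟩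
  · have hT0 := hT0 hk
    clear hT1
    rcases pT with ⟨t0, pT⟩ | ⟨t0, pT⟩ <;> rcases pC with ⟨-, pC⟩ | ⟨-, pC⟩
    · omega
    · omega
    · have := hT0 t0; omega
    · have := hT0 t0; omega
  · have hT1 := hT1 hk
    clear hT0
    rcases pT with ⟨t0, pT⟩ | ⟨t0, pT⟩ <;> rcases pC with ⟨-, pC⟩ | ⟨-, pC⟩
    · have := hT1 t0; omega
    · have := hT1 t0; omega
    · omega
    · omega

theorem upperCodes_codeShadow {n m k d κ : ℕ}
    (hκ : (κ = m + 1 ∧ n ≤ k) ∨ (κ = 0 ∧ k < n ∧ m ≤ 2)) {T : Finset ℕ}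
    (hT : ∀ c ∈ T, Valid n m k d c) (hup : UpperCodes n m k d κ T) :
    UpperCodes n m k (d + 1) κ (codeShadow n m k d T) := by
  intro c hc c' hc' hlt
  obtain ⟨hv, b, hb, hbc⟩ := mem_codeShadow.1 hc
  refine mem_codeShadow.2 ⟨hc', ?_⟩
  have hvb := hT b hb
  have hup' := hup b hb
  simp only [Valid] at hv hvb hc' hup'
  by_cases h0 : c' = 0
  · subst h0
    have hb0 : b ≠ 0 := by
      rintro rfl
      obtain rfl : c = 0 := by omega
      omega
    have hc0 : c ≠ 0 := by omega
    simp only [rankKey, hc0, if_true, if_false] at hlt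
    refine ⟨0, hup' 0 (by omega) ?_, by omega⟩
    simp only [rankKey, hb0, if_true, if_false]
    omega
  have key : b = 0 → κ = 0 := by
    rintro rfl
    obtain rfl : c = 0 := by omega
    simp only [rankKey, h0, if_true, if_false] at hlt
    omega
  by_cases h1 : b ≠ 0 ∧ c' ≤ b + 1
  · have hc0 : c ≠ 0 := by omega
    simp only [rankKey, h0, hc0, if_false] at hlt
    exact ⟨b, hb, by omega⟩
  have hw : ∀ w, w ≠ 0 → (b ≠ 0 → b < w) → rankKey κ b < rankKey κ w := by
    intro w hw hbw
    by_cases hb0 : b = 0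
    · simp only [rankKey, hw, hb0, if_true, if_false]
      have := key hb0
      omega
    · simp only [rankKey, hw, hb0, if_false]
      exact hbw hb0
  by_cases h2 : c' = 1
  · exact ⟨1, hup' 1 (by omega) (hw 1 one_ne_zero (by omega)), by omega⟩
  · exact ⟨c' - 1, hup' (c' - 1) (by omega) (hw _ (by omega) (by omega)), by omega⟩

/-! ### From code sets to the wedge -/

theorem mem_shadow {x : PBW n m k} {A : Finset (PBW n m k)} :
    x ∈ shadow A ↔ ∃ a ∈ A, a ⋖ x := by
  simp [_root_.shadow]

theorem image_wcode_shadow {d : ℕ} (hd : d ≠ 0) {A : Finset (PBW n m k)}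
    (hA : ∀ x ∈ A, wrk x = d) :
    (shadow A).image wcode = codeShadow n m k d (A.image wcode) := by
  ext c
  simp only [mem_image, mem_codeShadow, mem_shadow]
  constructor
  · rintro ⟨x, ⟨a, ha, hax⟩, rfl⟩
    obtain ⟨h1, h2⟩ := (covBy_iff (by rw [hA a ha]; exact hd)).1 hax
    rw [hA a ha] at h1
    exact ⟨(exists_wcode (by omega) _).1 ⟨x, h1, rfl⟩, _, ⟨a, ha, rfl⟩, h2⟩
  · rintro ⟨hv, _, ⟨a, ha, rfl⟩, h2⟩
    obtain ⟨x, hx, rfl⟩ := (exists_wcode (n := n) (m := m) (k := k) (by omega) _).2 hv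
    refine ⟨x, ⟨a, ha, (covBy_iff (by rw [hA a ha]; exact hd)).2 ⟨?_, h2⟩⟩, rfl⟩
    rw [hx, hA a ha]

theorem card_image_wcode {d : ℕ} {A : Finset (PBW n m k)} (hA : ∀ x ∈ A, wrk x = d) :
    (A.image wcode).card = A.card :=
  card_image_of_injOn fun x hx y hy h => wcode_inj ((hA x hx).trans (hA y hy).symm) h

theorem wrk_of_mem_shadow {d : ℕ} {A : Finset (PBW n m k)} (hA : ∀ x ∈ A, wrk x = d)
    {x : PBW n m k} (hx : x ∈ shadow A) : wrk x = d + 1 := by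
  obtain ⟨a, ha, hax⟩ := mem_shadow.1 hx
  by_cases hd : wrk a = 0
  · -- every `x` of rank at least two lies strictly above a point of rank one
    rw [← hA a ha, hd]
    obtain rfl := wrk_eq_zero.1 hd
    by_contra hne
    have hpos := (bot_lt_of_wrk x).1 hax.lt
    rcases PBW.cases x with rfl | ⟨b, h0, h, rfl⟩ | ⟨i, j, h0, hi, hj, rfl⟩
    · simp at hpos
    · simp only [wrk_path] at hne hpos
      exact hax.2 (c := pathPt 1 one_ne_zero (by omega))
        ((bot_lt_of_wrk _).2 (by simp)) ((path_lt_path ..).2 (by omega))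
    · simp only [wrk_box] at hne hpos
      by_cases hi0 : i = 0
      · exact hax.2 (c := boxPt 0 1 (by omega) (by omega) (by omega))
          ((bot_lt_of_wrk _).2 (by simp)) ((box_lt_box ..).2 (by omega))
      · exact hax.2 (c := boxPt 1 0 (by omega) (by omega) (by omega))
          ((bot_lt_of_wrk _).2 (by simp)) ((box_lt_box ..).2 (by omega))
  · rw [← hA a ha]
    exact ((covBy_iff hd).1 hax).1

theorem card_shadow {d : ℕ} (hd : d ≠ 0) {A : Finset (PBW n m k)}
    (hA : ∀ x ∈ A, wrk x = d) :
    (shadow A).card = (codeShadow n m k d (A.image wcode)).card := by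
  rw [← image_wcode_shadow hd hA, card_image_wcode fun x => wrk_of_mem_shadow hA]

theorem valid_image {d : ℕ} (hd : d ≠ 0) {A : Finset (PBW n m k)}
    (hA : ∀ x ∈ A, wrk x = d) : ∀ c ∈ A.image wcode, Valid n m k d c := by
  intro c hc
  obtain ⟨x, hx, rfl⟩ := mem_image.1 hc
  exact (exists_wcode hd _).1 ⟨x, hA x hx, rfl⟩

theorem mem_image_wcode {d : ℕ} {A : Finset (PBW n m k)} (hA : ∀ x ∈ A, wrk x = d)
    {x : PBW n m k} (hx : wrk x = d) : wcode x ∈ A.image wcode ↔ x ∈ A := by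
  constructor
  · intro h
    obtain ⟨y, hy, e⟩ := mem_image.1 h
    exact wcode_inj ((hA y hy).trans hx.symm) e ▸ hy
  · exact fun h => mem_image_of_mem _ h

/-- The total order on the wedge: by rank, and within a level by `rankKey κ`. -/
def wedgeLt (κ : ℕ) (x y : PBW n m k) : Prop :=
  wrk x < wrk y ∨ (wrk x = wrk y ∧ rankKey κ (wcode x) < rankKey κ (wcode y))

theorem isInitSeg_iff {κ d : ℕ} (hd : d ≠ 0) {S : Finset (PBW n m k)}
    (hS : ∀ x ∈ S, wrk x = d) :
    IsInitSeg wrk (wedgeLt κ) d S ↔ UpperCodes n m k d κ (S.image wcode) := by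
  constructor
  · rintro ⟨-, h⟩ c hc b hb hlt
    obtain ⟨a, ha, rfl⟩ := mem_image.1 hc
    obtain ⟨y, hy, rfl⟩ := (exists_wcode (n := n) (m := m) (k := k) hd _).2 hb
    exact mem_image_of_mem _ (h a ha y hy (Or.inr ⟨by rw [hS a ha, hy], hlt⟩))
  · refine fun h => ⟨hS, fun a ha b hb hlt => (mem_image_wcode hS hb).1 ?_⟩
    refine h _ (mem_image_of_mem _ ha) _ ((exists_wcode hd _).1 ⟨b, hb, rfl⟩) ?_
    rcases hlt with hlt | hlt
    · rw [hS a ha, hb] at hlt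
      exact absurd hlt (lt_irrefl d)
    · exact hlt.2

/-- The path point is placed first if the path ends before the levels of the box shrink, and last
otherwise. -/
theorem macaulayWith_wedgeLt (hmk : m ≤ k) {κ : ℕ}
    (hκ : (κ = m + 1 ∧ n ≤ k) ∨ (κ = 0 ∧ k < n ∧ m ≤ 2)) :
    MacaulayWith (wrk : PBW n m k → ℕ) (wedgeLt κ) := by
  refine ⟨⟨fun x y h1 h2 => ?_⟩, ⟨fun x y z h1 h2 => ?_⟩, ⟨fun x h => ?_⟩,
    fun d A S hA hS hcard => ?_, fun d S hS => ?_⟩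
  · simp only [wedgeLt, not_or, not_and, not_lt] at h1 h2
    have hr : wrk x = wrk y := le_antisymm h2.1 h1.1
    have hk : rankKey κ (wcode x) = rankKey κ (wcode y) :=
      le_antisymm (h2.2 hr.symm) (h1.2 hr)
    rcases Nat.eq_zero_or_pos (wrk x) with h0 | h0
    · rw [wrk_eq_zero.1 h0, wrk_eq_zero.1 (hr.symm.trans h0)]
    refine wcode_inj hr ?_
    have vx := (exists_wcode h0.ne' _).1 ⟨x, rfl, rfl⟩
    have vy := (exists_wcode h0.ne' _).1 ⟨y, hr.symm, rfl⟩
    simp only [Valid, rankKey] at vx vy hk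
    split_ifs at hk <;> omega
  · simp only [wedgeLt] at *
    omega
  · simp only [wedgeLt] at h
    omega
  · by_cases hd : d = 0
    · have hsub : ∀ B : Finset (PBW n m k), (∀ x ∈ B, wrk x = d) → B ⊆ {⊥} :=
        fun B hB x hx => mem_singleton.2 (wrk_eq_zero.1 ((hB x hx).trans hd))
      rcases subset_singleton_iff.1 (hsub A hA) with rfl | rfl <;>
        rcases subset_singleton_iff.1 (hsub S hS.1) with rfl | rfl <;> simp at hcard ⊢
    · rw [card_shadow hd hA, card_shadow hd hS.1]
      refine card_codeShadow_le hmk hd hκ (valid_image hd hA) (valid_image hd hS.1)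
        ((isInitSeg_iff hd hS.1).1 hS) ?_
      rw [card_image_wcode hA, card_image_wcode hS.1, hcard]
  · by_cases hd : d = 0
    · subst hd
      refine ⟨fun x hx => wrk_of_mem_shadow hS.1 hx, fun a ha b hb _ => ?_⟩
      obtain ⟨s, hs, -⟩ := mem_shadow.1 ha
      refine mem_shadow.2 ⟨s, hs, ?_⟩
      rw [wrk_eq_zero.1 (hS.1 s hs)]
      exact bot_covBy hb
    · rw [isInitSeg_iff d.succ_ne_zero fun x => wrk_of_mem_shadow hS.1,
        image_wcode_shadow hd hS.1]
      exact upperCodes_codeShadow hκ (valid_image hd hS.1) ((isInitSeg_iff hd hS.1).1 hS)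

/-! ### Necessity -/

theorem not_macaulay (hm : 3 ≤ m) (hmk : m ≤ k) (hn : k < n) {lt : PBW n m k → PBW n m k → Prop}
    (h : MacaulayWith wrk lt) : False := by
  obtain ⟨htri, htrans, hirr, hmin, hseg⟩ := h
  have hsing : ∀ {d : ℕ} {x : PBW n m k}, wrk x = d →
      ∀ y ∈ ({x} : Finset (PBW n m k)), wrk y = d := by
    intro d x hx y hy
    rw [mem_singleton.1 hy, hx]
  -- the path point comes first on level one
  have hfirst : IsInitSeg wrk lt 1 ({pathPt 1 one_ne_zero (by omega)} : Finset (PBW n m k)) := by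
    obtain ⟨x, hx, hxmax⟩ := (Finite.wellFounded_of_trans_of_irrefl (Function.swap lt)).has_min
      {x : PBW n m k | wrk x = 1} ⟨pathPt 1 one_ne_zero (by omega), rfl⟩
    have hinit : IsInitSeg wrk lt 1 {x} := by
      refine ⟨hsing hx, fun a ha b hb hab => ?_⟩
      rw [mem_singleton.1 ha] at hab
      exact absurd hab (hxmax b hb)
    have hle := hmin 1 {pathPt 1 one_ne_zero (by omega)} {x} (hsing (wrk_path ..)) hinit (by simp)
    rw [card_shadow one_ne_zero (hsing (wrk_path ..)), card_shadow one_ne_zero (hsing hx),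
      image_singleton, image_singleton, wcode_path] at hle
    have hp : codeShadow n m k 1 {0} ⊆ {0} := by
      intro c hc
      obtain ⟨-, b, hb, hbc⟩ := mem_codeShadow.1 hc
      simp only [mem_singleton] at hb ⊢
      omega
    have hle' := hle.trans (card_le_card hp)
    by_cases hx0 : wcode x = 0
    · convert hinit using 2
      exact wcode_inj hx.symm hx0.symm
    exfalso
    have hv := (exists_wcode one_ne_zero _).1 ⟨x, hx, rfl⟩
    have hsub : ({wcode x, wcode x + 1} : Finset ℕ) ⊆ codeShadow n m k 1 {wcode x} := by
      intro c hc
      simp only [mem_insert, mem_singleton] at hc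
      refine mem_codeShadow.2 ⟨?_, wcode x, mem_singleton_self _, Or.inr ⟨hx0, hc⟩⟩
      simp only [Valid] at hv ⊢
      omega
    have := card_le_card hsub
    rw [card_pair (by omega)] at this
    rw [card_singleton] at hle'
    omega
  -- hence on every level
  have hall : ∀ d, ∀ (h0 : d ≠ 0) (hd : d < n),
      IsInitSeg wrk lt d ({pathPt d h0 hd} : Finset (PBW n m k)) := by
    intro d h0
    induction d, Nat.one_le_iff_ne_zero.2 h0 using Nat.le_induction with
    | base => exact fun _ => hfirst
    | succ d hd ih =>
      intro hdn
      have := hseg d _ (ih (by omega) (by omega))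
      convert this using 1
      ext y
      rw [mem_singleton, mem_shadow]
      constructor
      · rintro rfl
        exact ⟨_, mem_singleton_self _, covBy_of_wrk ((path_lt_path ..).2 d.lt_succ_self) rfl⟩
      · rintro ⟨a, ha, hay⟩
        rw [mem_singleton.1 ha] at hay
        obtain ⟨h1, h2⟩ := (covBy_iff (by simp only [wrk_path]; omega)).1 hay
        refine wcode_inj h1 ?_
        simp only [wcode_path, ne_eq, not_true_eq_false, false_and, or_false, true_and] at h2
        exact h2
  -- on level `k - 1` the box level has the smallest shadow of its size
  obtain ⟨d, rfl⟩ : ∃ d, k = d + 1 := ⟨k - 1, by omega⟩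
  have hd0 : d ≠ 0 := by omega
  classical
  set L : Finset (PBW n m (d + 1)) := univ.filter fun x => wrk x = d with hL
  have hLrk : ∀ x ∈ L, wrk x = d := fun x hx => (mem_filter.1 hx).2
  set p : PBW n m (d + 1) := pathPt d hd0 (by omega) with hp
  have hpL : p ∈ L := mem_filter.2 ⟨mem_univ _, rfl⟩
  have hLim : L.image wcode = Icc 0 m := by
    ext c
    have := exists_wcode (n := n) (m := m) (k := d + 1) hd0 c
    simp only [hL, mem_image, mem_filter, mem_univ, true_and, this, Valid, mem_Icc]
    omega
  have hLcard : L.card = m + 1 := by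
    rw [← card_image_wcode hLrk, hLim, Nat.card_Icc]; omega
  -- removing the last point `y` of the level leaves the initial segment of size `m`
  obtain ⟨y, hy, hymin⟩ := (Finite.wellFounded_of_trans_of_irrefl lt).has_min
      {x : PBW n m (d + 1) | wrk x = d} ⟨p, rfl⟩
  have hyL : y ∈ L := mem_filter.2 ⟨mem_univ _, hy⟩
  have hyp : y ≠ p := by
    rintro rfl
    obtain ⟨z, hz, hzp⟩ := exists_mem_ne (by omega : 1 < L.card) p
    have h1 : lt p z := by
      by_contra hcon
      exact hzp (htri.trichotomous z p (hymin z (hLrk z hz)) hcon)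
    have := (hall d hd0 (by omega)).2 p (mem_singleton_self _) z (hLrk z hz) h1
    exact hzp (mem_singleton.1 this)
  have hsubL : ∀ z : PBW n m (d + 1), ∀ x ∈ L.erase z, wrk x = d :=
    fun z x hx => hLrk x (mem_erase.1 hx).2
  have hinit : IsInitSeg wrk lt d (L.erase y) := by
    refine ⟨hsubL y, fun a ha b hb hab => mem_erase.2 ⟨?_, mem_filter.2 ⟨mem_univ _, hb⟩⟩⟩
    rintro rfl
    exact hymin a (hsubL _ a ha) hab
  -- compare with the set `L.erase p` of all box points
  have hle := hmin d (L.erase p) (L.erase y) (hsubL p) hinit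
    (by rw [card_erase_of_mem hyL, card_erase_of_mem hpL])
  rw [card_shadow hd0 (hsubL p), card_shadow hd0 (hsubL y), card_codeShadow,
    card_codeShadow] at hle
  have him : ∀ z ∈ L, (L.erase z).image wcode = (Icc 0 m).erase (wcode z) := by
    intro z hz
    ext c
    rw [← hLim, mem_erase, mem_image, mem_image]
    constructor
    · rintro ⟨x, hx, rfl⟩
      obtain ⟨h1, h2⟩ := mem_erase.1 hx
      exact ⟨fun e => h1 (wcode_inj ((hLrk x h2).trans (hLrk z hz).symm) e), x, h2, rfl⟩
    · rintro ⟨h1, x, hx, rfl⟩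
      exact ⟨x, mem_erase.2 ⟨fun e => h1 (e ▸ rfl), hx⟩, rfl⟩
  have hy0 : wcode y ≠ 0 := fun e => hyp (wcode_inj hy e)
  have hym := (exists_wcode hd0 _).1 ⟨y, hy, rfl⟩
  have hlo : lowC (d + 1) (d + 1) = 2 := by simp only [lowC]; omega
  have hhi : highC m (d + 1) = m := by simp only [highC]; omega
  rw [him p hpL, him y hyL, hlo, hhi] at hle
  have hp0 : wcode p = 0 := rfl
  rw [hp0, if_pos ⟨mem_erase.2 ⟨hy0.symm, by simp⟩, hn⟩, if_neg (by simp)] at hle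
  have hupper : (boxShadow 2 m (((Icc 0 m).erase 0).erase 0)).card ≤ m + 1 - 2 := by
    rw [← Nat.card_Icc]
    exact card_le_card (filter_subset _ _)
  have hI : ((Icc 0 m).erase (wcode y)).erase 0 = (Icc 1 m).erase (wcode y) := by
    ext c
    simp only [mem_erase, mem_Icc]
    omega
  have hymem : wcode y ∈ Icc 1 m := by
    simp only [Valid] at hym
    rw [mem_Icc]
    omega
  obtain ⟨-, hl⟩ := card_le_card_boxShadow_clip (erase_subset (wcode y) (Icc 1 m))
  have hl := hl.resolve_right fun e => notMem_erase (wcode y) (Icc 1 m) (e.symm ▸ hymem)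
  rw [card_erase_of_mem hymem, Nat.card_Icc, one_add_one_eq_two] at hl
  rw [hI] at hle
  omega

end

/-- The wedge of the n-element path poset and an m'-by-n' box (m' ≤ n') is Macaulay iff
n ≤ n' or m' ≤ 2. -/
theorem stmt8 (n m' n' : ℕ) [NeZero n] [NeZero m'] [NeZero n'] (h : m' ≤ n') :
    IsMacaulay (wedgeRank Fin.val boxRank : Wedge (Fin n) (Box m' n') → ℕ) ↔
    (n ≤ n' ∨ m' ≤ 2) := by
  constructor
  · rintro ⟨lt, hlt⟩
    by_contra! hcon
    exact not_macaulay (by omega) h hcon.1 hlt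
  · intro hcase
    by_cases hn : n ≤ n'
    · exact ⟨_, macaulayWith_wedgeLt h (Or.inl ⟨rfl, hn⟩)⟩
    · exact ⟨_, macaulayWith_wedgeLt h (Or.inr ⟨rfl, by omega, by omega⟩)⟩
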